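/- Consider the sequencing choice program over a finite nonempty set D of n elements with root ∉ D. Then in every choice model M of this program there is an enumeration y_1, …, y_n of the distinct elements of D such that the succ-atoms of M are exactly {succ(root,root), succ(root,y_1), succ(y_1,y_2), …, succ(y_{n−1},y_n)}; i.e. the succ relation of every choice model is a chain linking root to all elements of D, establishing a total order on D. -/

import Mathlib

/-!
Two facts drive the proof. A stable model `M` is supported: every atom of `M` is the head of a rule
of the program whose body holds in `M` (`stable_supported`). Hence `chosen` is a partial injection
in `M`, since of two conflicting chosen tuples the support of one would refute the other
(`chosen_inj`).

Take a longest duplicate-free path `root → y₁ → … → yₖ` in `D` along `chosen` and `succ` atoms of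
`M`. Injectivity and maximality show that `M` chooses no successor for its endpoint. Consequently
the interpretation whose `succ` and `chosen` atoms are those of the path (plus `succ(root,root)`)
is a model of the reduct, and minimality of `M` shows that `M` has no other such atoms. Finally the
path covers `D`: if `y ∈ D` were missed, the tuple (endpoint, `y`) would conflict with no chosen
tuple, so `M` would have to choose it.
-/

/-- A ground rule: head, positive body, negative body. -/
structure GroundRule (A : Type) where
  head : A
  pos : Finset A
  neg : Finset A

/-- An interpretation `I` satisfies a ground rule. -/
def satisfiesRule {A : Type} (I : Set A) (r : GroundRule A) : Prop :=
  ((↑r.pos : Set A) ⊆ I ∧ ∀ a ∈ r.neg, a ∉ I) → r.head ∈ I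

/-- `I` is a model of the ground program `P`. -/
def isModel {A : Type} (P : Set (GroundRule A)) (I : Set A) : Prop :=
  ∀ r ∈ P, satisfiesRule I r

/-- The immediate consequence operator `T_P`. -/
def TP {A : Type} (P : Set (GroundRule A)) (I : Set A) : Set A :=
  { a | ∃ r ∈ P, r.head = a ∧ (↑r.pos : Set A) ⊆ I ∧ ∀ b ∈ r.neg, b ∉ I }

/-- The reduct of `P` with respect to `M`. -/
def reduct {A : Type} (P : Set (GroundRule A)) (M : Set A) : Set (GroundRule A) :=
  { r' | ∃ r ∈ P, (∀ b ∈ r.neg, b ∉ M) ∧ r' = ⟨r.head, r.pos, ∅⟩ }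

/-- `M` is the least model of `P`. -/
def isLeastModel {A : Type} (P : Set (GroundRule A)) (M : Set A) : Prop :=
  isModel P M ∧ ∀ M', isModel P M' → M ⊆ M'

/-- `M` is a stable model of `P`: it is the least model of the reduct of `P` w.r.t. `M`. -/
def isStableModel {A : Type} (P : Set (GroundRule A)) (M : Set A) : Prop :=
  isLeastModel (reduct P M) M

/-- Inflationary iteration `F^n(J)` where `F(I) = I ∪ T(I)`. -/
def iterT {A : Type} (T : Set A → Set A) (J : Set A) : ℕ → Set A
  | 0 => J
  | n + 1 => iterT T J n ∪ T (iterT T J n)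

/-- `T^{↑ω}(J) = ⋃ₙ Fⁿ(J)` where `F(I) = I ∪ T(I)`. -/
def Tomega {A : Type} (T : Set A → Set A) (J : Set A) : Set A :=
  ⋃ n, iterT T J n

/-- Atoms of the sequencing choice program over a carrier type `α`. -/
inductive SeqAtom (α : Type) : Type where
  | d : α → SeqAtom α
  | succ : α → α → SeqAtom α
  | chosen : α → α → SeqAtom α
  | diffchoice : α → α → SeqAtom α
deriving DecidableEq

variable {α : Type} [DecidableEq α]

/-- The value set `V = D ∪ {root}`. -/
def seqV (D : Finset α) (root : α) : Set α := insert root ↑D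

/-- Two tuples `(x,y)`, `(x',y')` conflict (FDs `X → Y` and `Y → X`): they
agree on one coordinate and differ on the other. -/
def seqConflict (t t' : α × α) : Prop :=
  (t.1 = t'.1 ∧ t.2 ≠ t'.2) ∨ (t.2 = t'.2 ∧ t.1 ≠ t'.1)

/-- `foe` of the sequencing choice program: the fact `succ(root,root)`, the
facts `d(y)` for `y ∈ D`, the `succ` rules, the chosen rules and the
diffchoice rules. -/
def seqFoe (D : Finset α) (root : α) : Set (GroundRule (SeqAtom α)) :=
  {⟨SeqAtom.succ root root, ∅, ∅⟩} ∪
  { ru | ∃ y ∈ D, ru = ⟨SeqAtom.d y, ∅, ∅⟩ } ∪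
  { ru | ∃ z ∈ seqV D root, ∃ x ∈ seqV D root, ∃ y ∈ D,
      ru = ⟨SeqAtom.succ x y, {SeqAtom.succ z x, SeqAtom.d y, SeqAtom.chosen x y}, ∅⟩ } ∪
  { ru | ∃ z ∈ seqV D root, ∃ x ∈ seqV D root, ∃ y ∈ D,
      ru = ⟨SeqAtom.chosen x y, {SeqAtom.succ z x, SeqAtom.d y},
            {SeqAtom.diffchoice x y}⟩ } ∪
  { ru | ∃ t t' : α × α, seqConflict t t' ∧
      ru = ⟨SeqAtom.diffchoice t.1 t.2, {SeqAtom.chosen t'.1 t'.2}, ∅⟩ }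

/-! ### Consecutive pairs of a list -/

section ChainLists

variable {β : Type}

/-- Appending `y` adds exactly one consecutive pair, from the old endpoint to `y`. -/
theorem mem_zip_snoc (ys : List β) (r y : β) (p : β × β) :
    p ∈ (r :: (ys ++ [y])).zip (ys ++ [y]) ↔
      p ∈ (r :: ys).zip ys ∨ p = ((r :: ys).getLast (by simp), y) := by
  induction ys generalizing r with
  | nil => simp
  | cons a l ih =>
    have h := ih a
    simp only [List.cons_append, List.zip_cons_cons, List.mem_cons] at h ⊢
    rw [h, List.getLast_cons (List.cons_ne_nil a l), or_assoc]

theorem exists_succ_or_last (ys : List β) (r x : β) (hx : x ∈ r :: ys) :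
    x = (r :: ys).getLast (by simp) ∨ ∃ y, (x, y) ∈ (r :: ys).zip ys := by
  induction ys generalizing r with
  | nil => simpa using hx
  | cons a l ih =>
    rcases List.mem_cons.1 hx with rfl | hx
    · exact Or.inr ⟨a, by simp⟩
    · rcases ih a hx with h | ⟨y, h⟩
      · left
        rw [List.getLast_cons (List.cons_ne_nil a l)]
        exact h
      · exact Or.inr ⟨y, by rw [List.zip_cons_cons]; exact List.mem_cons_of_mem _ h⟩

theorem exists_pred (ys : List β) (r y : β) (hy : y ∈ ys) :
    ∃ x, (x, y) ∈ (r :: ys).zip ys := by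
  induction ys generalizing r with
  | nil => simp at hy
  | cons a l ih =>
    rcases List.mem_cons.1 hy with rfl | hy
    · exact ⟨r, by simp⟩
    · obtain ⟨x, h⟩ := ih a hy
      exact ⟨x, by rw [List.zip_cons_cons]; exact List.mem_cons_of_mem _ h⟩

theorem ne_last_of_mem_zip (ys : List β) (r x y : β) (hn : (r :: ys).Nodup)
    (h : (x, y) ∈ (r :: ys).zip ys) : x ≠ (r :: ys).getLast (by simp) := by
  induction ys generalizing r with
  | nil => simp at h
  | cons a l ih =>
    rw [List.getLast_cons (List.cons_ne_nil a l)]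
    rw [List.zip_cons_cons] at h
    rcases List.mem_cons.1 h with h | h
    · obtain ⟨rfl, rfl⟩ := Prod.mk.inj h
      intro e
      exact (List.nodup_cons.1 hn).1 (e ▸ List.getLast_mem _)
    · exact ih a (List.nodup_cons.1 hn).2 h

end ChainLists

/-! ### Stable models -/

/-- Stable models are supported: removing an unsupported atom would leave a smaller model of the
reduct. -/
theorem stable_supported {A : Type} {P : Set (GroundRule A)} {M : Set A}
    (hM : isStableModel P M) {a : A} (ha : a ∈ M) :
    ∃ r ∈ P, r.head = a ∧ (↑r.pos : Set A) ⊆ M ∧ ∀ b ∈ r.neg, b ∉ M := by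
  by_contra hcon
  have hmod : isModel (reduct P M) (M \ {a}) := by
    rintro r' ⟨r, hr, hneg, rfl⟩ ⟨hpos, -⟩
    have hposM : (↑r.pos : Set A) ⊆ M := fun b hb => (hpos hb).1
    exact ⟨hM.1 _ ⟨r, hr, hneg, rfl⟩ ⟨hposM, by simp⟩,
      fun h => hcon ⟨r, hr, h, hposM, hneg⟩⟩
  exact (hM.2 _ hmod ha).2 rfl

theorem stable_model {A : Type} {P : Set (GroundRule A)} {M : Set A}
    (hM : isStableModel P M) {r : GroundRule A} (hr : r ∈ P)
    (hpos : (↑r.pos : Set A) ⊆ M) (hneg : ∀ b ∈ r.neg, b ∉ M) : r.head ∈ M :=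
  hM.1 ⟨r.head, r.pos, ∅⟩ ⟨r, hr, hneg, rfl⟩ ⟨hpos, by simp⟩

/-! ### The sequencing program -/

section Sequencing

variable {D : Finset α} {root : α} {M : Set (SeqAtom α)}

theorem root_mem (hM : isStableModel (seqFoe D root) M) : SeqAtom.succ root root ∈ M :=
  stable_model (r := ⟨SeqAtom.succ root root, ∅, ∅⟩) hM
    (by simp [seqFoe]) (by simp) (by simp)

theorem d_mem (hM : isStableModel (seqFoe D root) M) {y : α} (hy : y ∈ D) :
    SeqAtom.d y ∈ M :=
  stable_model (r := ⟨SeqAtom.d y, ∅, ∅⟩) hM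
    (Or.inl (Or.inl (Or.inl (Or.inr ⟨y, hy, rfl⟩)))) (by simp) (by simp)

theorem succ_mem (hM : isStableModel (seqFoe D root) M) {z x y : α}
    (hz : z ∈ seqV D root) (hx : x ∈ seqV D root) (hy : y ∈ D)
    (hs : SeqAtom.succ z x ∈ M) (hc : SeqAtom.chosen x y ∈ M) : SeqAtom.succ x y ∈ M :=
  stable_model (r := ⟨SeqAtom.succ x y,
      {SeqAtom.succ z x, SeqAtom.d y, SeqAtom.chosen x y}, ∅⟩) hM
    (Or.inl (Or.inl (Or.inr ⟨z, hz, x, hx, y, hy, rfl⟩)))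
    (by
      intro a ha
      simp only [Finset.coe_insert, Finset.coe_singleton, Set.mem_insert_iff,
        Set.mem_singleton_iff] at ha
      rcases ha with rfl | rfl | rfl
      exacts [hs, d_mem hM hy, hc]) (by simp)

theorem chosen_mem (hM : isStableModel (seqFoe D root) M) {z x y : α}
    (hz : z ∈ seqV D root) (hx : x ∈ seqV D root) (hy : y ∈ D)
    (hs : SeqAtom.succ z x ∈ M) (hc : SeqAtom.diffchoice x y ∉ M) : SeqAtom.chosen x y ∈ M :=
  stable_model (r := ⟨SeqAtom.chosen x y,
      {SeqAtom.succ z x, SeqAtom.d y}, {SeqAtom.diffchoice x y}⟩) hM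
    (Or.inl (Or.inr ⟨z, hz, x, hx, y, hy, rfl⟩))
    (by
      intro a ha
      simp only [Finset.coe_insert, Finset.coe_singleton, Set.mem_insert_iff,
        Set.mem_singleton_iff] at ha
      rcases ha with rfl | rfl
      exacts [hs, d_mem hM hy]) (by simpa using hc)

theorem diffchoice_mem (hM : isStableModel (seqFoe D root) M) {t t' : α × α}
    (h : seqConflict t t') (hc : SeqAtom.chosen t'.1 t'.2 ∈ M) :
    SeqAtom.diffchoice t.1 t.2 ∈ M :=
  stable_model (r := ⟨SeqAtom.diffchoice t.1 t.2, {SeqAtom.chosen t'.1 t'.2}, ∅⟩) hM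
    (Or.inr ⟨t, t', h, rfl⟩) (by simpa using hc) (by simp)

theorem chosen_supp (hM : isStableModel (seqFoe D root) M) {x y : α}
    (h : SeqAtom.chosen x y ∈ M) :
    ∃ z ∈ seqV D root, x ∈ seqV D root ∧ y ∈ D ∧ SeqAtom.succ z x ∈ M ∧
      SeqAtom.diffchoice x y ∉ M := by
  obtain ⟨r, hr, hh, hp, hn⟩ := stable_supported hM h
  rcases hr with (((rfl | ⟨y', hy', rfl⟩) | ⟨z, hz, x', hx', y', hy', rfl⟩) |
    ⟨z, hz, x', hx', y', hy', rfl⟩) | ⟨t, t', ht, rfl⟩ <;> simp at hh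
  obtain ⟨rfl, rfl⟩ := hh
  exact ⟨z, hz, hx', hy', hp (by simp), hn _ (by simp)⟩

theorem diffchoice_supp (hM : isStableModel (seqFoe D root) M) {x y : α}
    (h : SeqAtom.diffchoice x y ∈ M) :
    ∃ t', seqConflict (x, y) t' ∧ SeqAtom.chosen t'.1 t'.2 ∈ M := by
  obtain ⟨r, hr, hh, hp, hn⟩ := stable_supported hM h
  rcases hr with (((rfl | ⟨y', hy', rfl⟩) | ⟨z, hz, x', hx', y', hy', rfl⟩) |
    ⟨z, hz, x', hx', y', hy', rfl⟩) | ⟨t, t', ht, rfl⟩ <;> simp at hh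
  obtain ⟨rfl, rfl⟩ := hh
  exact ⟨t', ht, hp (by simp)⟩

/-- Chosen tuples of a stable model never conflict: `chosen` is a partial injection. -/
theorem chosen_inj (hM : isStableModel (seqFoe D root) M) {t t' : α × α}
    (h : SeqAtom.chosen t.1 t.2 ∈ M) (h' : SeqAtom.chosen t'.1 t'.2 ∈ M) :
    ¬ seqConflict t t' := fun hc => by
  obtain ⟨_, _, _, _, _, hd⟩ := chosen_supp hM h
  exact hd (diffchoice_mem hM hc h')

/-- `ys` lists without repetition the vertices after `root` of a path in `D` whose edges are both
`chosen` and `succ` atoms of `M`. -/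
def IsPath (D : Finset α) (root : α) (M : Set (SeqAtom α)) (ys : List α) : Prop :=
  ys.Nodup ∧ (∀ y ∈ ys, y ∈ D) ∧ ∀ p ∈ (root :: ys).zip ys,
    SeqAtom.chosen p.1 p.2 ∈ M ∧ SeqAtom.succ p.1 p.2 ∈ M

theorem exists_longest (D : Finset α) (root : α) (M : Set (SeqAtom α)) :
    ∃ ys, IsPath D root M ys ∧ ∀ zs, IsPath D root M zs → zs.length ≤ ys.length := by
  have hbd : ∀ zs, IsPath D root M zs → zs.length ≤ D.card := fun zs h => by
    rw [← List.toFinset_card_of_nodup h.1]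
    exact Finset.card_le_card fun y hy => h.2.1 y (List.mem_toFinset.1 hy)
  by_contra! hcon
  have hlong : ∀ n : ℕ, ∃ zs, IsPath D root M zs ∧ n ≤ zs.length := by
    intro n
    induction n with
    | zero => exact ⟨[], ⟨by simp, by simp, by simp⟩, by simp⟩
    | succ n ih =>
      obtain ⟨zs, hz, hl⟩ := ih
      obtain ⟨ws, hw, hl'⟩ := hcon zs hz
      exact ⟨ws, hw, by omega⟩
  obtain ⟨zs, hz, hl⟩ := hlong (D.card + 1)
  have := hbd zs hz
  omega

/-- No successor is chosen for the endpoint of a longest path: a new vertex would extend the path,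
an old one would have two chosen predecessors. -/
theorem last_not_chosen (hroot : root ∉ D) (hM : isStableModel (seqFoe D root) M) {ys : List α}
    (hp : IsPath D root M ys) (hmax : ∀ zs, IsPath D root M zs → zs.length ≤ ys.length) (y : α) :
    SeqAtom.chosen ((root :: ys).getLast (by simp)) y ∉ M := by
  intro hc
  obtain ⟨z, hz, hx, hy, hs, -⟩ := chosen_supp hM hc
  have hnd : (root :: ys).Nodup := List.nodup_cons.2 ⟨fun h => hroot (hp.2.1 _ h), hp.1⟩
  by_cases hmem : y ∈ ys
  · obtain ⟨x, hxy⟩ := exists_pred ys root y hmem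
    exact chosen_inj hM (t := (x, y)) (t' := (_, y)) (hp.2.2 _ hxy).1 hc
      (Or.inr ⟨rfl, ne_last_of_mem_zip ys root x y hnd hxy⟩)
  · have hpath : IsPath D root M (ys ++ [y]) := by
      refine ⟨?_, ?_, ?_⟩
      · rw [← List.concat_eq_append]
        exact hp.1.concat hmem
      · intro w hw
        rcases List.mem_append.1 hw with hw | hw
        · exact hp.2.1 w hw
        · rw [List.mem_singleton.1 hw]
          exact hy
      · intro p hpz
        rcases (mem_zip_snoc ys root y p).1 hpz with h | rfl
        · exact hp.2.2 p h
        · exact ⟨hc, succ_mem hM hz hx hy hs hc⟩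
    have := hmax _ hpath
    simp at this

/-- Every vertex of the path, `root` included, has an incoming `succ` atom. -/
theorem path_vertex_succ (hM : isStableModel (seqFoe D root) M) {ys : List α}
    (hp : IsPath D root M ys) {x : α} (hx : x ∈ root :: ys) :
    ∃ z ∈ seqV D root, x ∈ seqV D root ∧ SeqAtom.succ z x ∈ M := by
  rcases List.mem_cons.1 hx with rfl | hx
  · exact ⟨x, Or.inl rfl, Or.inl rfl, root_mem hM⟩
  · obtain ⟨z, hz⟩ := exists_pred ys root x hx
    obtain ⟨_, _, hzV, hxD, _, _⟩ := chosen_supp hM (hp.2.2 _ hz).1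
    exact ⟨z, hzV, Or.inr hxD, (hp.2.2 _ hz).2⟩

/-- The interpretation given by the path: its `succ` and `chosen` atoms are the edges of the path,
plus `succ(root,root)`; all `d` and `diffchoice` atoms are admitted, as only an upper bound on the
other two predicates is needed. -/
def pathInterp (root : α) (ys : List α) : Set (SeqAtom α) :=
  { a | match a with
    | SeqAtom.d _ => True
    | SeqAtom.succ x y => (x, y) = (root, root) ∨ (x, y) ∈ (root :: ys).zip ys
    | SeqAtom.chosen x y => (x, y) ∈ (root :: ys).zip ys
    | SeqAtom.diffchoice _ _ => True }

theorem subset_pathInterp (hroot : root ∉ D) (hM : isStableModel (seqFoe D root) M)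
    {ys : List α} (hp : IsPath D root M ys)
    (hmax : ∀ zs, IsPath D root M zs → zs.length ≤ ys.length) :
    M ⊆ pathInterp root ys := by
  apply hM.2
  rintro r' ⟨r, hr, hneg, rfl⟩ ⟨hpos, -⟩
  rcases hr with (((rfl | ⟨y, hy, rfl⟩) | ⟨z, hz, x, hx, y, hy, rfl⟩) |
    ⟨z, hz, x, hx, y, hy, rfl⟩) | ⟨t, t', ht, rfl⟩
  · exact Or.inl rfl
  · trivial
  · have h : SeqAtom.chosen x y ∈ pathInterp root ys := hpos (by simp)
    exact Or.inr h
  · have h : SeqAtom.succ z x ∈ pathInterp root ys := hpos (by simp)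
    have hxmem : x ∈ root :: ys := by
      rcases h with h | h
      · rw [(Prod.mk.inj h).2]
        exact List.mem_cons_self
      · exact List.mem_cons_of_mem _ (List.of_mem_zip h).2
    obtain ⟨w, hw, hxV, hs⟩ := path_vertex_succ hM hp hxmem
    have hc : SeqAtom.chosen x y ∈ M := chosen_mem hM hw hxV hy hs (hneg _ (by simp))
    rcases exists_succ_or_last ys root x hxmem with hl | ⟨y', hy'⟩
    · rw [hl] at hc
      exact absurd hc (last_not_chosen hroot hM hp hmax y)
    · have hyy : y = y' := by
        by_contra hne
        exact chosen_inj hM (t := (x, y)) (t' := (x, y')) hc (hp.2.2 _ hy').1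
          (Or.inl ⟨rfl, hne⟩)
      rw [← hyy] at hy'
      exact hy'
  · trivial

end Sequencing

/-- in every choice model `M` of the sequencing program over a
finite nonempty set `D` with `root ∉ D`, there is an enumeration `y₁, …, yₙ` of
the distinct elements of `D` such that the succ-atoms of `M` are exactly
`{succ(root,root), succ(root,y₁), succ(y₁,y₂), …, succ(y_{n-1},yₙ)}`. -/
theorem sequencing_choice_model_is_chain
    (D : Finset α) (hD : D.Nonempty) (root : α) (hroot : root ∉ D)
    (M : Set (SeqAtom α)) (hM : isStableModel (seqFoe D root) M) :
    ∃ ys : List α, ys.Nodup ∧ ys.toFinset = D ∧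
      { p : α × α | SeqAtom.succ p.1 p.2 ∈ M } =
        insert (root, root) { p : α × α | p ∈ (root :: ys).zip ys } := by
  obtain ⟨ys, hp, hmax⟩ := exists_longest D root M
  have hsub := subset_pathInterp hroot hM hp hmax
  refine ⟨ys, hp.1, ?_, ?_⟩
  · ext y
    rw [List.mem_toFinset]
    refine ⟨hp.2.1 y, fun hy => ?_⟩
    by_contra hmem
    have hnot := last_not_chosen hroot hM hp hmax
    obtain ⟨z, hz, hl, hs⟩ := path_vertex_succ hM hp
      (List.getLast_mem (l := root :: ys) (by simp))
    by_cases hd : SeqAtom.diffchoice ((root :: ys).getLast (by simp)) y ∈ M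
    · obtain ⟨⟨a, b⟩, hconf, hc⟩ := diffchoice_supp hM hd
      -- The conflicting tuple either leaves the endpoint, which is impossible, or enters `y`,
      -- and is then an edge of the path.
      rcases hconf with ⟨h1, -⟩ | ⟨h2, -⟩
      · dsimp only at h1 hc
        rw [← h1] at hc
        exact hnot b hc
      · have hz : (a, b) ∈ (root :: ys).zip ys := hsub hc
        dsimp only at h2
        exact hmem (h2 ▸ (List.of_mem_zip hz).2)
    · exact hnot y (chosen_mem hM hz hl hy hs hd)
  · ext ⟨x, y⟩
    constructor
    · intro h
      exact hsub h
    · rintro (h | h)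
      · obtain ⟨rfl, rfl⟩ := Prod.mk.inj h
        exact root_mem hM
      · exact (hp.2.2 _ h).2
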